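/- Let U: ℝ^d → ℝ be continuously differentiable with ∇U bounded and Lipschitz continuous, let T > 0, let α ∈ [0,1], and for ε > 0 let φ_ε denote the density of the normal distribution with mean 0 and variance ε. For a smooth compactly supported function f: ℝ^d → ℝ define L₁^ε f(x) := (1/(d ε)) Σ_{i=1}^d ∫_ℝ (f(x + z e_i) − f(x)) · exp(−(U(x + z e_i) − U(x))₊/T) φ_ε(z) dz, L₂^ε f(x) := (1/(d ε)) Σ_{i=1}^d ∫_ℝ (f(x + z e_i) − f(x)) · exp((U(x) − U(x + z e_i))₊/T) φ_ε(z) dz, and the Langevin generator G f(x) := −(1/(2Td)) Σ_{i=1}^d ∂_{x_i}U(x) ∂_{x_i}f(x) + (1/(2d)) Σ_{i=1}^d ∂²_{x_i}f(x). Then for every smooth compactly supported f, sup_{x ∈ ℝ^d} |α L₁^ε f(x) + (1−α) L₂^ε f(x) − G f(x)| → 0 as ε → 0. -/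

import Mathlib

open MeasureTheory

/-- Density of the one-dimensional normal distribution with mean `0` and variance `ε`. -/
noncomputable def gaussDensity (ε z : ℝ) : ℝ :=
  (Real.sqrt (2 * Real.pi * ε))⁻¹ * Real.exp (-z ^ 2 / (2 * ε))

namespace MHAux

lemma gd_nonneg (ε z : ℝ) : 0 ≤ gaussDensity ε z := by unfold gaussDensity; positivity

lemma gd_cont (ε : ℝ) : Continuous (gaussDensity ε) := by unfold gaussDensity; fun_prop

lemma gd_neg (ε z : ℝ) : gaussDensity ε (-z) = gaussDensity ε z := by simp [gaussDensity]

lemma gd_scale (ε : ℝ) (hε : 0 < ε) (w : ℝ) :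
    √ε * gaussDensity ε (√ε * w) = gaussDensity 1 w := by
  unfold gaussDensity
  have h1 : √(2 * Real.pi * ε) = √(2 * Real.pi * 1) * √ε := by
    rw [mul_one, Real.sqrt_mul (by positivity)]
  have h2 : -(√ε * w) ^ 2 / (2 * ε) = -w ^ 2 / (2 * 1) := by
    rw [mul_pow, Real.sq_sqrt hε.le]; field_simp
  rw [h1, h2]
  have : √ε ≠ 0 := by positivity
  field_simp

lemma integral_gd_scale (F : ℝ → ℝ) (ε : ℝ) (hε : 0 < ε) :
    ∫ z, F z * gaussDensity ε z = ∫ w, F (√ε * w) * gaussDensity 1 w := by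
  have h := Measure.integral_comp_mul_left (fun z => F z * gaussDensity ε z) (√ε)
  have hs : 0 < √ε := by positivity
  have : ∀ w, F (√ε * w) * gaussDensity 1 w
      = √ε * (F (√ε * w) * gaussDensity ε (√ε * w)) := by
    intro w; rw [← gd_scale ε hε w]; ring
  simp_rw [this]
  rw [integral_const_mul, h, abs_of_pos (by positivity), smul_eq_mul, ← mul_assoc,
    mul_inv_cancel₀ hs.ne', one_mul]

lemma gd_eq (z : ℝ) : gaussDensity 1 z = ProbabilityTheory.gaussianPDFReal 0 1 z := by
  simp [gaussDensity, ProbabilityTheory.gaussianPDFReal]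

lemma integral_sq : ∫ z, z ^ 2 * gaussDensity 1 z = 1 := by
  have h := ProbabilityTheory.variance_id_gaussianReal (μ := 0) (v := 1)
  rw [ProbabilityTheory.variance_eq_integral (by fun_prop)] at h
  rw [ProbabilityTheory.integral_gaussianReal_eq_integral_smul (by norm_num)] at h
  simp at h
  refine Eq.trans ?_ h
  congr 1; ext z; rw [gd_eq]; ring

lemma dom_integrable (M : ℝ) :
    Integrable (fun z : ℝ => Real.exp (M * |z|) * gaussDensity 1 z) := by
  have h0 := (integrable_exp_neg_mul_sq (b := 1/4) (by norm_num)).const_mul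
    (Real.exp (M^2) * (√(2 * Real.pi * 1))⁻¹)
  refine h0.mono' ?_ ?_
  · exact (Continuous.mul (by fun_prop) (gd_cont 1)).aestronglyMeasurable
  · filter_upwards with z
    rw [Real.norm_of_nonneg (mul_nonneg (Real.exp_pos _).le (gd_nonneg _ _))]
    unfold gaussDensity
    have : Real.exp (M * |z|) * Real.exp (-z ^ 2 / (2 * 1))
        ≤ Real.exp (M^2) * Real.exp (-(1/4) * z^2) := by
      rw [← Real.exp_add, ← Real.exp_add]
      apply Real.exp_le_exp.2
      nlinarith [sq_nonneg (M - |z|/2), sq_abs z]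
    have h3 : 0 ≤ (√(2 * Real.pi * 1))⁻¹ := by positivity
    nlinarith [mul_le_mul_of_nonneg_left this h3]

lemma pow_le (n : ℕ) (t : ℝ) (ht : 0 ≤ t) : t ^ n ≤ n.factorial * Real.exp t := by
  have := Real.pow_div_factorial_le_exp t ht n
  rw [div_le_iff₀ (by positivity)] at this
  linarith

lemma cube_integrable (n : ℕ) (M : ℝ) :
    Integrable (fun z : ℝ => |z| ^ n * Real.exp (M * |z|) * gaussDensity 1 z) := by
  refine ((dom_integrable (M+1)).const_mul (n.factorial : ℝ)).mono' ?_ ?_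
  · exact (Continuous.mul (by fun_prop) (gd_cont 1)).aestronglyMeasurable
  · filter_upwards with z
    have h1 := gd_nonneg 1 z
    rw [Real.norm_of_nonneg (by positivity), ← mul_assoc]
    apply mul_le_mul_of_nonneg_right _ h1
    rw [add_mul, one_mul, Real.exp_add]
    have := pow_le n |z| (abs_nonneg z)
    nlinarith [mul_le_mul_of_nonneg_right this (Real.exp_pos (M * |z|)).le]

lemma int_of_bound (n : ℕ) (F : ℝ → ℝ) (hF : Continuous F) (h : ∀ z, |F z| ≤ |z| ^ n) :
    Integrable (fun z => F z * gaussDensity 1 z) := by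
  refine (cube_integrable n 0).mono' ?_ ?_
  · exact (hF.mul (gd_cont 1)).aestronglyMeasurable
  · filter_upwards with z
    have h1 := gd_nonneg 1 z
    rw [norm_mul, Real.norm_of_nonneg h1]
    simpa using mul_le_mul_of_nonneg_right (h z) h1

lemma odd_zero (F : ℝ → ℝ) (h : ∀ z, F (-z) = - F z) : ∫ z, F z * gaussDensity 1 z = 0 := by
  have := integral_neg_eq_self (fun z => F z * gaussDensity 1 z) volume
  simp only [h, gd_neg, neg_mul, integral_neg] at this
  linarith

lemma main_integral (p q r : ℝ) :
    Integrable (fun z => (p * z + q * z ^ 2 + r * (z * |z|)) * gaussDensity 1 z) ∧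
    ∫ z, (p * z + q * z ^ 2 + r * (z * |z|)) * gaussDensity 1 z = q := by
  have i1 := (int_of_bound 1 (fun z => z) (by fun_prop) (by simp)).const_mul p
  have i2 := (int_of_bound 2 (fun z => z ^ 2) (by fun_prop) (by simp)).const_mul q
  have i3 := (int_of_bound 2 (fun z => z * |z|) (by fun_prop)
    (by intro z; simp [abs_mul, sq])).const_mul r
  have e : (fun z => (p * z + q * z ^ 2 + r * (z * |z|)) * gaussDensity 1 z)
    = fun z => p * (z * gaussDensity 1 z) + q * (z ^ 2 * gaussDensity 1 z)
        + r * (z * |z| * gaussDensity 1 z) := by ext z; ring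
  rw [e]
  refine ⟨(i1.add i2).add i3, ?_⟩
  rw [integral_add (by exact i1.add i2) i3, integral_add i1 i2, integral_const_mul, integral_const_mul,
    integral_const_mul, integral_sq, odd_zero (fun z => z) (by simp),
    odd_zero (fun z => z * |z|) (by simp)]
  ring

lemma asym (M C : ℝ) (hM : 0 ≤ M) (hC : 0 ≤ C) (F : ℝ → ℝ) (hF : Continuous F) (p q r : ℝ)
    (h : ∀ z, |F z - (p * z + q * z ^ 2 + r * (z * |z|))| ≤ C * (|z| ^ 3 * Real.exp (M * |z|)))
    (ε : ℝ) (hε : 0 < ε) (hε1 : ε ≤ 1) :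
    |(1 / ε) * (∫ z, F z * gaussDensity ε z) - q| ≤
      √ε * (C * ∫ z, |z| ^ 3 * Real.exp (M * |z|) * gaussDensity 1 z) := by
  set s := √ε with hs
  have hs0 : 0 < s := by positivity
  have hs1 : s ≤ 1 := Real.sqrt_le_one.2 hε1
  have hse : s ^ 2 = ε := Real.sq_sqrt hε.le
  rw [integral_gd_scale F ε hε]
  obtain ⟨mi, me⟩ := main_integral (p * s) (q * ε) (r * ε)
  set R : ℝ → ℝ := fun w => (F (s * w) - (p * s * w + q * ε * w ^ 2 + r * ε * (w * |w|)))
    * gaussDensity 1 w with hR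
  have hb : ∀ w, ‖R w‖ ≤ s ^ 3 * C * (|w| ^ 3 * Real.exp (M * |w|) * gaussDensity 1 w) := by
    intro w
    have h1 := gd_nonneg 1 w
    rw [hR]
    simp only
    rw [norm_mul, Real.norm_of_nonneg h1, ← mul_assoc (s ^ 3 * C)]
    apply mul_le_mul_of_nonneg_right _ h1
    have := h (s * w)
    rw [abs_mul, abs_of_pos hs0] at this
    have e : p * (s * w) + q * (s * w) ^ 2 + r * (s * w * (s * |w|))
       = p * s * w + q * ε * w ^ 2 + r * ε * (w * |w|) := by rw [← hse]; ring
    rw [e] at this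
    refine this.trans ?_
    have : Real.exp (M * (s * |w|)) ≤ Real.exp (M * |w|) := by
      apply Real.exp_le_exp.2
      have := abs_nonneg w
      gcongr
      nlinarith
    calc C * ((s * |w|) ^ 3 * Real.exp (M * (s * |w|))) ≤ C * ((s * |w|) ^ 3 * Real.exp (M * |w|)) := by
          gcongr
      _ = _ := by ring
  have hdi := (cube_integrable 3 M).const_mul (s ^ 3 * C)
  have hRi : Integrable R := by
    refine hdi.mono' ?_ (Filter.Eventually.of_forall hb)
    exact (Continuous.mul (by fun_prop) (gd_cont 1)).aestronglyMeasurable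
  have e : ∫ w, F (s * w) * gaussDensity 1 w = (∫ w, R w) + q * ε := by
    rw [← me, ← integral_add hRi mi]
    congr 1; ext w; simp only [hR]; ring
  have hle := norm_integral_le_of_norm_le hdi (Filter.Eventually.of_forall hb)
  rw [integral_const_mul, Real.norm_eq_abs] at hle
  rw [e]
  have e2 : 1 / ε * ((∫ w, R w) + q * ε) - q = (1 / ε) * ∫ w, R w := by field_simp; ring
  rw [e2, abs_mul, abs_of_pos (by positivity), one_div, inv_mul_le_iff₀ hε]
  refine hle.trans (le_of_eq ?_)
  rw [← hse]; ring

/-- mean value growth lemma -/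
lemma growth (h h' : ℝ → ℝ) (C : ℝ) (n : ℕ) (hC : 0 ≤ C) (hd : ∀ z, HasDerivAt h (h' z) z)
    (h0 : h 0 = 0) (hb : ∀ z, |h' z| ≤ C * |z| ^ n) (z : ℝ) : |h z| ≤ C * |z| ^ (n + 1) := by
  have := (convex_uIcc (0:ℝ) z).norm_image_sub_le_of_norm_hasDerivWithin_le
    (f := h) (f' := h') (C := C * |z| ^ n)
    (fun x _ => (hd x).hasDerivWithinAt) (fun x hx => by
      rw [Real.norm_eq_abs]
      refine (hb x).trans ?_
      have : |x| ≤ |z| := by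
        simpa using Set.abs_sub_left_of_mem_uIcc hx
      gcongr) Set.left_mem_uIcc Set.right_mem_uIcc
  rw [h0] at this
  simp only [sub_zero, Real.norm_eq_abs] at this
  rw [pow_succ, ← mul_assoc]; exact this

/-- core estimate -/
lemma core (T K B1 B2 B3 L a b c z D E s s0 : ℝ) (hT : 0 < T) (hK : 0 ≤ K) (hL : 0 ≤ L)
    (hB1 : 0 ≤ B1) (hB2 : 0 ≤ B2) (hB3 : 0 ≤ B3)
    (hD1 : |D| ≤ B1 * |z|) (hD2 : |D - b * z| ≤ B2 * |z| ^ 2)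
    (hD3 : |D - b * z - c * z ^ 2 / 2| ≤ B3 * |z| ^ 3)
    (hE : E = Real.exp s) (hs : |s| ≤ K / T * |z|) (hs0 : |s0| ≤ K / T * |z|)
    (hss : |s - s0| ≤ L / T * |z| ^ 2) :
    |D * E - (b * z + c * z ^ 2 / 2 + b * z * s0)| ≤
      (B1 * ((K / T) ^ 2 + L / T) + B3 + B2 * (K / T)) * (|z| ^ 3 * Real.exp (K / T * |z|)) := by
  set M := K / T with hM
  have hM0 : 0 ≤ M := by positivity
  have hLT : 0 ≤ L / T := by positivity
  set N := L / T
  set X := Real.exp (M * |z|) with hX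
  have hX1 : 1 ≤ X := Real.one_le_exp (by positivity)
  have hexp : |Real.exp s - 1 - s| ≤ s ^ 2 * Real.exp |s| := by
    have := Complex.norm_exp_sub_sum_le_norm_mul_exp (s : ℂ) 2
    simp only [Finset.sum_range_succ, Finset.sum_range_zero] at this
    norm_num at this
    rw [← Complex.ofReal_exp, ← sub_sub] at this
    norm_cast at this
  have h1 : |E - 1 - s0| ≤ (M ^ 2 + N) * |z| ^ 2 * X := by
    rw [hE]
    have t : |Real.exp s - 1 - s0| ≤ |Real.exp s - 1 - s| + |s - s0| := by
      have := abs_add_le (Real.exp s - 1 - s) (s - s0)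
      have e : Real.exp s - 1 - s0 = Real.exp s - 1 - s + (s - s0) := by ring
      rw [e]; exact this
    have h2 : s ^ 2 * Real.exp |s| ≤ (M * |z|) ^ 2 * X := by
      have : s ^ 2 ≤ (M * |z|) ^ 2 := by rw [← sq_abs s]; gcongr
      have h' : Real.exp |s| ≤ X := Real.exp_le_exp.2 hs
      gcongr
    have h3 : N * |z| ^ 2 ≤ N * |z| ^ 2 * X := le_mul_of_one_le_right (by positivity) hX1
    nlinarith
  have e : D * E - (b * z + c * z ^ 2 / 2 + b * z * s0) =
      D * (E - 1 - s0) + (D - b * z - c * z ^ 2 / 2) + (D - b * z) * s0 := by ring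
  rw [e]
  have k1 : |D * (E - 1 - s0)| ≤ (B1 * |z|) * ((M ^ 2 + N) * |z| ^ 2 * X) := by
    rw [abs_mul]; gcongr
  have k2 : |(D - b * z) * s0| ≤ (B2 * |z| ^ 2) * (M * |z|) := by
    rw [abs_mul]; gcongr
  have k3 : (B2 * |z| ^ 2) * (M * |z|) ≤ (B2 * |z| ^ 2) * (M * |z|) * X :=
    le_mul_of_one_le_right (by positivity) hX1
  have k4 : B3 * |z| ^ 3 ≤ B3 * |z| ^ 3 * X := le_mul_of_one_le_right (by positivity) hX1
  have t := abs_add_three (D * (E - 1 - s0)) (D - b * z - c * z ^ 2 / 2) ((D - b * z) * s0)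
  nlinarith

lemma pos_est (T K L a g z : ℝ) (hT : 0 < T) (hg : |g| ≤ K * |z|) (ha : |a| ≤ K)
    (hga : |g - a * z| ≤ L * |z| ^ 2) :
    |max g 0 / T| ≤ K / T * |z| ∧ |max (a * z) 0 / T| ≤ K / T * |z| ∧
    |max g 0 / T - max (a * z) 0 / T| ≤ L / T * |z| ^ 2 := by
  have haz : |a * z| ≤ K * |z| := by rw [abs_mul]; gcongr
  have m : ∀ y : ℝ, |max y 0| ≤ |y| := by
    intro y; rw [abs_of_nonneg (le_max_right _ _)]; exact max_le (le_abs_self _) (abs_nonneg _)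
  have l := abs_max_sub_max_le_abs g (a * z) 0
  refine ⟨?_, ?_, ?_⟩
  · rw [abs_div, abs_of_pos hT, div_mul_eq_mul_div]; gcongr; exact (m _).trans hg
  · rw [abs_div, abs_of_pos hT, div_mul_eq_mul_div]; gcongr; exact (m _).trans haz
  · rw [← sub_div, abs_div, abs_of_pos hT, div_mul_eq_mul_div]; gcongr; exact l.trans hga

lemma lin_sub (h : ℝ → ℝ) (h' k c t : ℝ) (hd : HasDerivAt h h' t) :
    HasDerivAt (fun t => h t - k - c * t) (h' - c) t := by
  have h1 : HasDerivAt (fun t : ℝ => c * t) c t := by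
    simpa using (hasDerivAt_id' t).const_mul c
  exact (hd.sub_const k).fun_sub h1

lemma quad_sub (h : ℝ → ℝ) (h' k c q t : ℝ) (hd : HasDerivAt h h' t) :
    HasDerivAt (fun t => h t - k - c * t - q * t ^ 2 / 2) (h' - c - q * t) t := by
  have h1 : HasDerivAt (fun t : ℝ => q * t ^ 2 / 2) (q * t) t := by
    have := (((hasDerivAt_pow 2 t)).const_mul q).div_const 2
    refine this.congr_deriv ?_
    push_cast; ring
  exact (lin_sub h h' k c t hd).fun_sub h1

variable {V : Type*} [NormedAddCommGroup V] [NormedSpace ℝ V]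

lemma line_deriv (F : V → ℝ) (hF : Differentiable ℝ F) (x e : V) (z : ℝ) :
    HasDerivAt (fun t : ℝ => F (x + t • e)) (fderiv ℝ F (x + z • e) e) z := by
  have h1 : HasDerivAt (fun t : ℝ => x + t • e) e z := by
    simpa using ((hasDerivAt_id z).smul_const e).const_add x
  exact (hF (x + z • e)).hasFDerivAt.comp_hasDerivAt z h1

lemma dir_smooth (F : V → ℝ) (hF : ContDiff ℝ (⊤ : ℕ∞) F) (e : V) :
    ContDiff ℝ (⊤ : ℕ∞) (fun y => fderiv ℝ F y e) :=
  (hF.fderiv_right (m := (⊤ : ℕ∞)) (by exact_mod_cast le_rfl)).clm_apply contDiff_const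

lemma dir_supp (F : V → ℝ) (hF : HasCompactSupport F) (e : V) :
    HasCompactSupport (fun y => fderiv ℝ F y e) := hF.fderiv_apply ℝ e

lemma bdd {V : Type*} [NormedAddCommGroup V] (F : V → ℝ) (hF : Continuous F) (hs : HasCompactSupport F) :
    ∃ B : ℝ, 0 ≤ B ∧ ∀ x, |F x| ≤ B := by
  obtain ⟨B, hB⟩ := hF.bounded_above_of_compact_support hs
  exact ⟨B, (norm_nonneg _).trans (hB 0), hB⟩

lemma f_est (f : V → ℝ) (hf : ContDiff ℝ (⊤ : ℕ∞) f) (hsupp : HasCompactSupport f) (e : V) :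
    ∃ B1 B2 B3 : ℝ, 0 ≤ B1 ∧ 0 ≤ B2 ∧ 0 ≤ B3 ∧ ∀ (x : V) (z : ℝ),
      |f (x + z • e) - f x| ≤ B1 * |z| ∧
      |f (x + z • e) - f x - fderiv ℝ f x e * z| ≤ B2 * |z| ^ 2 ∧
      |f (x + z • e) - f x - fderiv ℝ f x e * z
        - fderiv ℝ (fun y => fderiv ℝ f y e) x e * z ^ 2 / 2| ≤ B3 * |z| ^ 3 := by
  set f1 : V → ℝ := fun y => fderiv ℝ f y e with hf1
  set f2 : V → ℝ := fun y => fderiv ℝ f1 y e with hf2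
  set f3 : V → ℝ := fun y => fderiv ℝ f2 y e with hf3
  have c1 : ContDiff ℝ (⊤ : ℕ∞) f1 := dir_smooth f hf e
  have c2 : ContDiff ℝ (⊤ : ℕ∞) f2 := dir_smooth f1 c1 e
  have c3 : ContDiff ℝ (⊤ : ℕ∞) f3 := dir_smooth f2 c2 e
  have s1 : HasCompactSupport f1 := dir_supp f hsupp e
  have s2 : HasCompactSupport f2 := dir_supp f1 s1 e
  have s3 : HasCompactSupport f3 := dir_supp f2 s2 e
  obtain ⟨B1, p1, b1⟩ := bdd f1 c1.continuous s1
  obtain ⟨B2, p2, b2⟩ := bdd f2 c2.continuous s2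
  obtain ⟨B3, p3, b3⟩ := bdd f3 c3.continuous s3
  have d0 : ∀ x z, HasDerivAt (fun t : ℝ => f (x + t • e)) (f1 (x + z • e)) z :=
    fun x z => line_deriv f (hf.differentiable (by simp)) x e z
  have d1 : ∀ x z, HasDerivAt (fun t : ℝ => f1 (x + t • e)) (f2 (x + z • e)) z :=
    fun x z => line_deriv f1 (c1.differentiable (by simp)) x e z
  have d2 : ∀ x z, HasDerivAt (fun t : ℝ => f2 (x + t • e)) (f3 (x + z • e)) z :=
    fun x z => line_deriv f2 (c2.differentiable (by simp)) x e z
  refine ⟨B1, B2, B3, p1, p2, p3, fun x z => ⟨?_, ?_, ?_⟩⟩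
  · have := growth (fun t => f (x + t • e) - f x) (fun t => f1 (x + t • e)) B1 0 p1
      (fun t => (d0 x t).sub_const _) (by simp) (by intro t; simpa using b1 _) z
    simpa using this
  · have g1 := growth (fun t => f1 (x + t • e) - f1 x) (fun t => f2 (x + t • e)) B2 0 p2
      (fun t => (d1 x t).sub_const _) (by simp) (by intro t; simpa using b2 _)
    exact growth (fun t => f (x + t • e) - f x - f1 x * t) (fun t => f1 (x + t • e) - f1 x) B2 1 p2
      (fun t => lin_sub _ _ _ _ _ (d0 x t))
      (by simp) g1 z
  · have g2 := growth (fun t => f2 (x + t • e) - f2 x) (fun t => f3 (x + t • e)) B3 0 p3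
      (fun t => (d2 x t).sub_const _) (by simp) (by intro t; simpa using b3 _)
    have g1 := growth (fun t => f1 (x + t • e) - f1 x - f2 x * t)
      (fun t => f2 (x + t • e) - f2 x) B3 1 p3
      (fun t => lin_sub _ _ _ _ _ (d1 x t))
      (by simp) g2
    refine growth (fun t => f (x + t • e) - f x - f1 x * t - f2 x * t ^ 2 / 2)
      (fun t => f1 (x + t • e) - f1 x - f2 x * t) B3 2 p3
      (fun t => ?_) (by simp) g1 z
    exact quad_sub _ _ _ _ _ _ (d0 x t)

lemma U_est (U : V → ℝ) (hU : ContDiff ℝ 1 U) (K : ℝ) (hbd : ∀ x, ‖fderiv ℝ U x‖ ≤ K)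
    (L : NNReal) (hlip : LipschitzWith L (fderiv ℝ U)) (e : V) (he : ‖e‖ = 1) (x : V) (z : ℝ) :
    |U (x + z • e) - U x| ≤ K * |z| ∧ |fderiv ℝ U x e| ≤ K ∧
    |U (x + z • e) - U x - fderiv ℝ U x e * z| ≤ L * |z| ^ 2 := by
  have hK : 0 ≤ K := (norm_nonneg _).trans (hbd 0)
  have d0 : ∀ z, HasDerivAt (fun t : ℝ => U (x + t • e)) (fderiv ℝ U (x + z • e) e) z :=
    fun z => line_deriv U (hU.differentiable (by simp)) x e z
  have hb : ∀ y, |fderiv ℝ U y e| ≤ K := fun y => by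
    have := (fderiv ℝ U y).le_opNorm e
    rw [he, mul_one] at this
    exact this.trans (hbd y)
  refine ⟨?_, hb x, ?_⟩
  · have := growth (fun t => U (x + t • e) - U x) (fun t => fderiv ℝ U (x + t • e) e) K 0 hK
      (fun t => (d0 t).sub_const _) (by simp) (by intro t; simpa using hb _) z
    simpa using this
  · refine growth (fun t => U (x + t • e) - U x - fderiv ℝ U x e * t)
      (fun t => fderiv ℝ U (x + t • e) e - fderiv ℝ U x e) L 1 L.2
      (fun t => lin_sub _ _ _ _ _ (d0 t))
      (by simp) ?_ z
    intro t
    have h1 := hlip.dist_le_mul (x + t • e) x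
    rw [dist_eq_norm, dist_eq_norm, add_sub_cancel_left, norm_smul, he, mul_one] at h1
    have h2 := (fderiv ℝ U (x + t • e) - fderiv ℝ U x).le_opNorm e
    rw [he, mul_one] at h2
    simpa using h2.trans h1

lemma dir_est (T : ℝ) (hT : 0 < T) (U : V → ℝ) (hU : ContDiff ℝ 1 U)
    (K : ℝ) (hbd : ∀ x, ‖fderiv ℝ U x‖ ≤ K)
    (L : NNReal) (hlip : LipschitzWith L (fderiv ℝ U))
    (f : V → ℝ) (hf : ContDiff ℝ (⊤ : ℕ∞) f) (hsupp : HasCompactSupport f)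
    (e : V) (he : ‖e‖ = 1) :
    ∃ C : ℝ, 0 ≤ C ∧ ∀ ε : ℝ, 0 < ε → ε ≤ 1 → ∀ x : V,
      |(1 / ε) * (∫ z : ℝ, (f (x + z • e) - f x) *
          Real.exp (-(max (U (x + z • e) - U x) 0) / T) * gaussDensity ε z)
        - (fderiv ℝ (fun y => fderiv ℝ f y e) x e / 2 -
            fderiv ℝ U x e * fderiv ℝ f x e / (2 * T))| ≤ √ε * C ∧
      |(1 / ε) * (∫ z : ℝ, (f (x + z • e) - f x) *
          Real.exp (max (U x - U (x + z • e)) 0 / T) * gaussDensity ε z)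
        - (fderiv ℝ (fun y => fderiv ℝ f y e) x e / 2 -
            fderiv ℝ U x e * fderiv ℝ f x e / (2 * T))| ≤ √ε * C := by
  obtain ⟨B1, B2, B3, p1, p2, p3, hest⟩ := f_est f hf hsupp e
  have hK : 0 ≤ K := (norm_nonneg _).trans (hbd 0)
  have hL : (0:ℝ) ≤ L := L.2
  have hfc := hf.continuous
  have hUc := hU.continuous
  have hC0 : 0 ≤ (B1 * ((K / T) ^ 2 + L / T) + B3 + B2 * (K / T)) := by positivity
  have hM : 0 ≤ K / T := by positivity
  have hmax : ∀ y : ℝ, max y 0 = (y + |y|) / 2 := by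
    intro y; rcases le_total 0 y with h | h
    · rw [max_eq_left h, abs_of_nonneg h]; ring
    · rw [max_eq_right h, abs_of_nonpos h]; ring
  refine ⟨_, mul_nonneg hC0 (integral_nonneg (μ := volume) (f := fun z : ℝ =>
    |z| ^ 3 * Real.exp (K / T * |z|) * gaussDensity 1 z)
    (fun z => mul_nonneg (by positivity) (gd_nonneg 1 z))), fun ε hε hε1 x => ⟨?_, ?_⟩⟩
  · refine asym (K / T) _ hM hC0 (fun z => (f (x + z • e) - f x) *
          Real.exp (-(max (U (x + z • e) - U x) 0) / T)) (by fun_prop) (fderiv ℝ f x e) _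
          (-(fderiv ℝ f x e * |fderiv ℝ U x e| / (2 * T))) ?_ ε hε hε1
    intro z
    obtain ⟨u1, u2, u3⟩ := U_est U hU K hbd L hlip e he x z
    obtain ⟨e1, e2, e3⟩ := hest x z
    obtain ⟨q1, q2, q3⟩ := pos_est T K L (fderiv ℝ U x e) _ z hT u1 u2 u3
    have := core T K B1 B2 B3 L (fderiv ℝ U x e) (fderiv ℝ f x e) _ z _ _
      (-(max (U (x + z • e) - U x) 0) / T) (-(max (fderiv ℝ U x e * z) 0 / T)) hT hK hL p1 p2 p3
      e1 e2 e3 rfl (by rwa [neg_div, abs_neg]) (by rwa [abs_neg])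
      (by rwa [neg_div, neg_sub_neg, abs_sub_comm])
    convert this using 2
    rw [hmax (fderiv ℝ U x e * z), abs_mul]
    field_simp; ring
  · refine asym (K / T) _ hM hC0 (fun z => (f (x + z • e) - f x) *
          Real.exp (max (U x - U (x + z • e)) 0 / T)) (by fun_prop) (fderiv ℝ f x e) _
          (fderiv ℝ f x e * |fderiv ℝ U x e| / (2 * T)) ?_ ε hε hε1
    intro z
    obtain ⟨u1, u2, u3⟩ := U_est U hU K hbd L hlip e he x z
    obtain ⟨e1, e2, e3⟩ := hest x z
    obtain ⟨q1, q2, q3⟩ := pos_est T K L (-fderiv ℝ U x e) (U x - U (x + z • e)) z hT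
      (by rwa [abs_sub_comm]) (by rwa [abs_neg])
      (by rw [← abs_neg]; convert u3 using 2; ring)
    have := core T K B1 B2 B3 L (fderiv ℝ U x e) (fderiv ℝ f x e) _ z _ _
      (max (U x - U (x + z • e)) 0 / T) (max (-fderiv ℝ U x e * z) 0 / T) hT hK hL p1 p2 p3
      e1 e2 e3 rfl q1 q2 q3
    convert this using 2
    rw [hmax (-fderiv ℝ U x e * z), abs_mul, abs_neg]
    field_simp; ring

end MHAux

/-- For every `α ∈ [0,1]`, the rescaled generator `α L₁^ε + (1−α) L₂^ε` of the convex
combination of the two Metropolis-Hastings processes converges, uniformly in `x`, to the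
generator of the time-rescaled Langevin diffusion
`dX(t) = −∇U(X(t))/(2Td) dt + d^{−1/2} dW(t)` for every smooth compactly supported `f`. -/
theorem mh_convex_generator_converges_to_langevin {d : ℕ} (hd : 0 < d) (T : ℝ) (hT : 0 < T)
    (α : ℝ) (hα : α ∈ Set.Icc (0:ℝ) 1)
    (U : EuclideanSpace ℝ (Fin d) → ℝ) (hU : ContDiff ℝ 1 U)
    (K : ℝ) (hbd : ∀ x, ‖fderiv ℝ U x‖ ≤ K)
    (L : NNReal) (hlip : LipschitzWith L (fderiv ℝ U))
    (f : EuclideanSpace ℝ (Fin d) → ℝ) (hf : ContDiff ℝ (⊤ : ℕ∞) f) (hsupp : HasCompactSupport f) :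
    ∀ δ > (0:ℝ), ∃ ε₀ > (0:ℝ), ∀ ε : ℝ, 0 < ε → ε < ε₀ →
      ∀ x : EuclideanSpace ℝ (Fin d),
        |α * ((1 / ((d : ℝ) * ε)) * ∑ i : Fin d, ∫ z : ℝ,
                (f (x + z • EuclideanSpace.single i (1:ℝ)) - f x) *
                  Real.exp (-(max (U (x + z • EuclideanSpace.single i (1:ℝ)) - U x) 0) / T) *
                  gaussDensity ε z)
          + (1 - α) * ((1 / ((d : ℝ) * ε)) * ∑ i : Fin d, ∫ z : ℝ,
                (f (x + z • EuclideanSpace.single i (1:ℝ)) - f x) *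
                  Real.exp (max (U x - U (x + z • EuclideanSpace.single i (1:ℝ))) 0 / T) *
                  gaussDensity ε z)
          - (-(1 / (2 * T * (d : ℝ))) * ∑ i : Fin d,
                fderiv ℝ U x (EuclideanSpace.single i (1:ℝ)) *
                  fderiv ℝ f x (EuclideanSpace.single i (1:ℝ))
              + (1 / (2 * (d : ℝ))) * ∑ i : Fin d,
                  fderiv ℝ (fun y => fderiv ℝ f y (EuclideanSpace.single i (1:ℝ))) x
                    (EuclideanSpace.single i (1:ℝ)))|
          < δ := by
  have key := fun i : Fin d => MHAux.dir_est T hT U hU K hbd L hlip f hf hsupp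
    (EuclideanSpace.single i (1:ℝ)) (by simp)
  choose C hC0 hC using key
  intro δ hδ
  have hS : 0 ≤ ∑ i, C i := Finset.sum_nonneg fun i _ => hC0 i
  set S := ∑ i, C i with hSdef
  refine ⟨min 1 ((δ / (S + 1)) ^ 2), by positivity, ?_⟩
  intro ε hε hεlt x
  have hε1 : ε ≤ 1 := (hεlt.trans_le (min_le_left _ _)).le
  have hsq : √ε < δ / (S + 1) := by
    rw [Real.sqrt_lt' (by positivity)]
    exact hεlt.trans_le (min_le_right _ _)
  have hd1 : (1:ℝ) ≤ d := by exact_mod_cast hd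
  have hd0 : (0:ℝ) < d := by linarith
  obtain ⟨ha0, ha1⟩ := hα
  set I1 : Fin d → ℝ := fun i => ∫ z : ℝ,
                (f (x + z • EuclideanSpace.single i (1:ℝ)) - f x) *
                  Real.exp (-(max (U (x + z • EuclideanSpace.single i (1:ℝ)) - U x) 0) / T) *
                  gaussDensity ε z with hI1
  set I2 : Fin d → ℝ := fun i => ∫ z : ℝ,
                (f (x + z • EuclideanSpace.single i (1:ℝ)) - f x) *
                  Real.exp (max (U x - U (x + z • EuclideanSpace.single i (1:ℝ))) 0 / T) *
                  gaussDensity ε z with hI2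
  set A : Fin d → ℝ := fun i => fderiv ℝ U x (EuclideanSpace.single i (1:ℝ)) *
                  fderiv ℝ f x (EuclideanSpace.single i (1:ℝ)) with hA
  set Q : Fin d → ℝ := fun i =>
    fderiv ℝ (fun y => fderiv ℝ f y (EuclideanSpace.single i (1:ℝ))) x
                    (EuclideanSpace.single i (1:ℝ)) with hQ
  have hk : ∀ i, |α * ((1 / ε) * I1 i - (Q i / 2 - A i / (2 * T)))
      + (1 - α) * ((1 / ε) * I2 i - (Q i / 2 - A i / (2 * T)))| ≤ √ε * C i := by
    intro i
    obtain ⟨h1, h2⟩ := hC i ε hε hε1 x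
    refine (abs_add_le _ _).trans ?_
    rw [abs_mul, abs_mul, abs_of_nonneg ha0, abs_of_nonneg (sub_nonneg.2 ha1)]
    have k1 := mul_le_mul_of_nonneg_left h1 ha0
    have k2 := mul_le_mul_of_nonneg_left h2 (sub_nonneg.2 ha1)
    calc _ ≤ α * (√ε * C i) + (1 - α) * (√ε * C i) := add_le_add k1 k2
      _ = _ := by ring
  have hsum : |∑ i, (α * ((1 / ε) * I1 i - (Q i / 2 - A i / (2 * T)))
      + (1 - α) * ((1 / ε) * I2 i - (Q i / 2 - A i / (2 * T))))| ≤ √ε * S := by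
    refine (Finset.abs_sum_le_sum_abs _ _).trans ?_
    rw [hSdef, Finset.mul_sum]
    exact Finset.sum_le_sum fun i _ => hk i
  have heq : α * ((1 / ((d : ℝ) * ε)) * ∑ i, I1 i) + (1 - α) * ((1 / ((d : ℝ) * ε)) * ∑ i, I2 i)
      - (-(1 / (2 * T * (d : ℝ))) * ∑ i, A i + (1 / (2 * (d : ℝ))) * ∑ i, Q i)
      = (1 / d) * ∑ i, (α * ((1 / ε) * I1 i - (Q i / 2 - A i / (2 * T)))
      + (1 - α) * ((1 / ε) * I2 i - (Q i / 2 - A i / (2 * T)))) := by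
    simp only [Finset.mul_sum, ← Finset.sum_add_distrib, ← Finset.sum_sub_distrib]
    refine Finset.sum_congr rfl fun i _ => ?_
    field_simp
    ring
  rw [heq, abs_mul, abs_of_pos (by positivity : (0:ℝ) < 1 / d)]
  have hlt : √ε * S < δ := by
    rw [lt_div_iff₀ (by positivity)] at hsq
    have : 0 < √ε := by positivity
    nlinarith
  have hd' : (1:ℝ) / d ≤ 1 := by rw [div_le_one hd0]; exact hd1
  calc _ ≤ 1 * (√ε * S) := by gcongr
    _ < δ := by linarith
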